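/- Assume a₁₂ is of class C^{2,1} on [−1,1]². For every u ∈ C⁴([−1,1]²) there exists a constant C > 0 such that for every even N ≥ 4 (h = 2/N) and every interior grid node (x,y), |(L_h⁻ u)(x,y) − ( ∂x(a₁₂ ∂y u)(x,y) + ∂y(a₁₂ ∂x u)(x,y) )| ≤ C h². -/

import Mathlib

open Set

noncomputable section

/-- The closed square `[-1,1]²` as a subset of `ℝ × ℝ`. -/
def Q2 : Set (ℝ × ℝ) := Set.Icc ((-1 : ℝ), (-1 : ℝ)) (1, 1)

/-- Partial derivative in the first coordinate direction. -/
def px (f : ℝ × ℝ → ℝ) (z : ℝ × ℝ) : ℝ := fderiv ℝ f z (1, 0)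

/-- Partial derivative in the second coordinate direction. -/
def py (f : ℝ × ℝ → ℝ) (z : ℝ × ℝ) : ℝ := fderiv ℝ f z (0, 1)

/-- `f` is of class `C^{2,1}` on `s`: twice continuously differentiable with Lipschitz
continuous second derivatives. -/
def C21On (f : ℝ × ℝ → ℝ) (s : Set (ℝ × ℝ)) : Prop :=
  ContDiffOn ℝ 2 f s ∧ ∃ K : NNReal, LipschitzOnWith K (iteratedFDerivWithin ℝ 2 f s) s

/-- Grid node `(x_i, y_j) = (-1 + i h, -1 + j h)` with `h = 2/N`. -/
def nodePt (N i j : ℕ) : ℝ × ℝ := (-1 + i * (2 / (N : ℝ)), -1 + j * (2 / (N : ℝ)))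

/-- The mixed-term operator `L_h⁻` (designed for negative `a₁₂`). -/
def Lhm (a12 : ℝ × ℝ → ℝ) (h : ℝ) (v : ℝ × ℝ → ℝ) (z : ℝ × ℝ) : ℝ :=
  (1 / (2 * h ^ 2)) *
    (-(a12 (z.1 - h / 2, z.2 + h) + a12 (z.1 - h, z.2 + h / 2)) * v (z.1 - h, z.2 + h)
      + (a12 (z.1 - h / 2, z.2 + h) + a12 (z.1, z.2 + h / 2)) * v (z.1, z.2 + h)
      + (a12 (z.1 - h, z.2 + h / 2) + a12 (z.1 - h / 2, z.2)) * v (z.1 - h, z.2)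
      - (a12 (z.1, z.2 + h / 2) + a12 (z.1 - h / 2, z.2)
          + a12 (z.1, z.2 - h / 2) + a12 (z.1 + h / 2, z.2)) * v z
      + (a12 (z.1 + h, z.2 - h / 2) + a12 (z.1 + h / 2, z.2)) * v (z.1 + h, z.2)
      + (a12 (z.1, z.2 - h / 2) + a12 (z.1 + h / 2, z.2 - h)) * v (z.1, z.2 - h)
      - (a12 (z.1 + h, z.2 - h / 2) + a12 (z.1 + h / 2, z.2 - h)) * v (z.1 + h, z.2 - h))

/-- The mixed-term operator `L_h⁺` (designed for nonnegative `a₁₂`). -/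
def Lhp (a12 : ℝ × ℝ → ℝ) (h : ℝ) (v : ℝ × ℝ → ℝ) (z : ℝ × ℝ) : ℝ :=
  (1 / (2 * h ^ 2)) *
    (-(a12 (z.1 + h / 2, z.2 + h) + a12 (z.1, z.2 + h / 2)) * v (z.1, z.2 + h)
      + (a12 (z.1 + h / 2, z.2 + h) + a12 (z.1 + h, z.2 + h / 2)) * v (z.1 + h, z.2 + h)
      - (a12 (z.1 - h, z.2 - h / 2) + a12 (z.1 - h / 2, z.2)) * v (z.1 - h, z.2)
      + (a12 (z.1, z.2 + h / 2) + a12 (z.1 - h / 2, z.2)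
          + a12 (z.1, z.2 - h / 2) + a12 (z.1 + h / 2, z.2)) * v z
      - (a12 (z.1 + h, z.2 + h / 2) + a12 (z.1 + h / 2, z.2)) * v (z.1 + h, z.2)
      + (a12 (z.1 - h, z.2 - h / 2) + a12 (z.1 - h / 2, z.2 - h)) * v (z.1 - h, z.2 - h)
      - (a12 (z.1, z.2 - h / 2) + a12 (z.1 - h / 2, z.2 - h)) * v (z.1, z.2 - h))

set_option maxSynthPendingDepth 3

abbrev E2 := ℝ × ℝ

/-- First derivative within the square. -/
def D1 (f : E2 → ℝ) : E2 → (E2 →L[ℝ] ℝ) := fderivWithin ℝ f Q2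
/-- Second derivative within the square. -/
def D2 (f : E2 → ℝ) : E2 → (E2 →L[ℝ] E2 →L[ℝ] ℝ) := fderivWithin ℝ (D1 f) Q2
/-- Third derivative within the square. -/
def D3 (f : E2 → ℝ) : E2 → (E2 →L[ℝ] E2 →L[ℝ] E2 →L[ℝ] ℝ) := fderivWithin ℝ (D2 f) Q2

lemma convex_Q2 : Convex ℝ Q2 := convex_Icc _ _

lemma compact_Q2 : IsCompact Q2 := isCompact_Icc

lemma mem_Q2 (x y : ℝ) : (x, y) ∈ Q2 ↔ (-1 ≤ x ∧ -1 ≤ y) ∧ x ≤ 1 ∧ y ≤ 1 := by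
  simp [Q2, Prod.le_def]

lemma nhds_Q2 {x y : ℝ} (h1 : -1 < x) (h2 : x < 1) (h3 : -1 < y) (h4 : y < 1) :
    Q2 ∈ nhds (x, y) := by
  have : Q2 = Icc (-1 : ℝ) 1 ×ˢ Icc (-1 : ℝ) 1 := by
    rw [Icc_prod_Icc]; rfl
  rw [this]
  exact prod_mem_nhds (Icc_mem_nhds h1 h2) (Icc_mem_nhds h3 h4)

lemma unique_Q2 : UniqueDiffOn ℝ Q2 := by
  apply uniqueDiffOn_convex convex_Q2
  refine ⟨(0, 0), ?_⟩
  rw [mem_interior_iff_mem_nhds]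
  apply nhds_Q2 <;> norm_num

lemma line_mem {z d : E2} (hz : z ∈ Q2) (hd : z + d ∈ Q2) {t : ℝ} (ht : t ∈ Icc (0 : ℝ) 1) :
    z + t • d ∈ Q2 := convex_Q2.add_smul_mem hz hd ht

lemma line_deriv {G : Type*} [NormedAddCommGroup G] [NormedSpace ℝ G] {F : E2 → G}
    (hF : DifferentiableOn ℝ F Q2) {z d : E2} (hz : z ∈ Q2) (hd : z + d ∈ Q2) {t : ℝ}
    (ht : t ∈ Icc (0 : ℝ) 1) :
    HasDerivWithinAt (fun t : ℝ => F (z + t • d)) (fderivWithin ℝ F Q2 (z + t • d) d)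
      (Icc 0 1) t := by
  have h1 := (hF _ (line_mem hz hd ht)).hasFDerivWithinAt
  have h2 : HasDerivWithinAt (fun t : ℝ => z + t • d) d (Icc 0 1) t := by
    have := ((hasDerivWithinAt_id t (Icc (0 : ℝ) 1)).smul_const d).const_add z
    simpa using this
  exact h1.comp_hasDerivWithinAt t h2 (fun s hs => line_mem hz hd hs)

/-- One dimensional Taylor estimate. -/
lemma taylor1 {g g1 g2 : ℝ → ℝ} {k B : ℝ}
    (h0 : ∀ t ∈ Icc (0 : ℝ) 1, HasDerivWithinAt g (g1 t) (Icc 0 1) t)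
    (h1 : ∀ t ∈ Icc (0 : ℝ) 1, HasDerivWithinAt g1 (g2 t) (Icc 0 1) t)
    (h2 : ∀ t ∈ Icc (0 : ℝ) 1, |g2 t - g2 0 - t * k| ≤ B) :
    |g 1 - g 0 - g1 0 - g2 0 / 2 - k / 6| ≤ B := by
  have hB : 0 ≤ B := (abs_nonneg _).trans (h2 0 (by simp))
  have e1 : ∀ t ∈ Icc (0 : ℝ) 1, |g1 t - g1 0 - t * g2 0 - t ^ 2 / 2 * k| ≤ B := by
    intro t ht
    have := norm_image_sub_le_of_norm_deriv_le_segment' (a := 0) (b := 1) (C := B)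
      (f := fun t => g1 t - t * g2 0 - t ^ 2 / 2 * k) (f' := fun t => g2 t - g2 0 - t * k)
      (fun x hx => by
        have a1 := ((hasDerivWithinAt_id x (Icc (0 : ℝ) 1)).mul_const (g2 0))
        have a2 := ((((hasDerivWithinAt_id x (Icc (0 : ℝ) 1)).pow 2).div_const 2).mul_const k)
        convert! ((h1 x hx).sub a1).sub a2 using 1
        simp) (fun x hx => h2 x ⟨hx.1, hx.2.le⟩) t ht
    rw [Real.norm_eq_abs] at this
    have e : g1 t - g1 0 - t * g2 0 - t ^ 2 / 2 * k =
      g1 t - t * g2 0 - t ^ 2 / 2 * k - (g1 0 - 0 * g2 0 - 0 ^ 2 / 2 * k) := by ring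
    rw [e]
    refine this.trans ?_
    nlinarith [ht.1, ht.2]
  have := norm_image_sub_le_of_norm_deriv_le_segment_01' (C := B)
      (f := fun t => g t - t * g1 0 - t ^ 2 / 2 * g2 0 - t ^ 3 / 6 * k)
      (f' := fun t => g1 t - g1 0 - t * g2 0 - t ^ 2 / 2 * k)
      (fun x hx => by
        have a1 := ((hasDerivWithinAt_id x (Icc (0 : ℝ) 1)).mul_const (g1 0))
        have a2 := ((((hasDerivWithinAt_id x (Icc (0 : ℝ) 1)).pow 2).div_const 2).mul_const (g2 0))
        have a3 := ((((hasDerivWithinAt_id x (Icc (0 : ℝ) 1)).pow 3).div_const 6).mul_const k)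
        convert! (((h0 x hx).sub a1).sub a2).sub a3 using 1
        simp only [id]
        push_cast
        ring) (fun x hx => e1 x ⟨hx.1, hx.2.le⟩)
  rw [Real.norm_eq_abs] at this
  convert this using 2
  ring

lemma bound_Q2 {G : Type*} [NormedAddCommGroup G] {F : E2 → G} (hF : ContinuousOn F Q2) :
    ∃ M : ℝ, ∀ z ∈ Q2, ‖F z‖ ≤ M := compact_Q2.exists_bound_of_continuousOn hF

lemma D1_contDiff {f : E2 → ℝ} {m n : ℕ} (hmn : m + 1 ≤ n) (hf : ContDiffOn ℝ n f Q2) :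
    ContDiffOn ℝ m (D1 f) Q2 := hf.fderivWithin unique_Q2 (by exact_mod_cast hmn)

lemma D2_contDiff {f : E2 → ℝ} {m n : ℕ} (hmn : m + 2 ≤ n) (hf : ContDiffOn ℝ n f Q2) :
    ContDiffOn ℝ m (D2 f) Q2 :=
  (D1_contDiff (m := m + 1) (by omega) hf).fderivWithin unique_Q2 (by norm_cast)

lemma D3_contDiff {f : E2 → ℝ} {m n : ℕ} (hmn : m + 3 ≤ n) (hf : ContDiffOn ℝ n f Q2) :
    ContDiffOn ℝ m (D3 f) Q2 :=
  (D2_contDiff (m := m + 1) (by omega) hf).fderivWithin unique_Q2 (by norm_cast)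

lemma lip_Q2 {G : Type*} [NormedAddCommGroup G] [NormedSpace ℝ G] {F : E2 → G}
    (hF : ContDiffOn ℝ 1 F Q2) : ∃ M : ℝ, ∀ z ∈ Q2, ∀ w ∈ Q2, ‖F w - F z‖ ≤ M * ‖w - z‖ := by
  obtain ⟨M, hM⟩ := bound_Q2 (hF.continuousOn_fderivWithin unique_Q2 (by norm_num))
  exact ⟨M, fun z hz w hw => convex_Q2.norm_image_sub_le_of_norm_fderivWithin_le
    (hF.differentiableOn (by norm_num)) hM hz hw⟩

lemma line_taylor {f : E2 → ℝ} (hf : ContDiffOn ℝ 2 f Q2) {z d : E2} (hz : z ∈ Q2)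
    (hd : z + d ∈ Q2) {k B : ℝ}
    (h : ∀ t ∈ Icc (0 : ℝ) 1, |D2 f (z + t • d) d d - D2 f z d d - t * k| ≤ B) :
    |f (z + d) - f z - D1 f z d - D2 f z d d / 2 - k / 6| ≤ B := by
  have := taylor1 (g := fun t => f (z + t • d)) (g1 := fun t => D1 f (z + t • d) d)
    (g2 := fun t => D2 f (z + t • d) d d) (k := k) (B := B)
    (fun t ht => line_deriv (hf.differentiableOn (by norm_num)) hz hd ht)
    (fun t ht => by
      have a := line_deriv ((D1_contDiff (m := 1) (n := 2) le_rfl hf).differentiableOn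
        (by norm_num)) hz hd ht
      have b := a.clm_apply (hasDerivWithinAt_const t (Icc (0 : ℝ) 1) d)
      convert! b using 1
      simp [D2])
    (by simpa using h)
  simpa using this

lemma taylor_a {f : E2 → ℝ} (hf : C21On f Q2) : ∃ M : ℝ, ∀ z ∈ Q2,
    |f z| ≤ M ∧ ‖D1 f z‖ ≤ M ∧ ‖D2 f z‖ ≤ M ∧ ∀ d : E2, z + d ∈ Q2 →
      |f (z + d) - f z - D1 f z d - D2 f z d d / 2| ≤ M * ‖d‖ ^ 3 := by
  obtain ⟨hf, K, hK⟩ := hf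
  obtain ⟨M0, h0⟩ := bound_Q2 hf.continuousOn
  obtain ⟨M1, h1⟩ := bound_Q2 (D1_contDiff (m := 0) (n := 2) (by norm_num) hf).continuousOn
  obtain ⟨M2, h2⟩ := bound_Q2 (D2_contDiff (m := 0) (n := 2) (by norm_num) hf).continuousOn
  refine ⟨max (max M0 M1) (max M2 K), fun z hz => ⟨(h0 z hz).trans (by simp),
    (h1 z hz).trans (by simp), (h2 z hz).trans (by simp), fun d hd => ?_⟩⟩
  have key := line_taylor hf hz hd (k := 0) (B := K * ‖d‖ ^ 3) (fun t ht => by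
    have a := hK.norm_sub_le (line_mem hz hd ht) hz
    have b : ∀ w ∈ Q2, D2 f w d d = iteratedFDerivWithin ℝ 2 f Q2 w ![d, d] := by
      intro w hw
      rw [iteratedFDerivWithin_two_apply f unique_Q2 hw]
      rfl
    rw [b _ (line_mem hz hd ht), b _ hz, mul_zero, sub_zero,
      ← _root_.sub_apply, ← Real.norm_eq_abs]
    refine (ContinuousMultilinearMap.le_opNorm _ _).trans ?_
    simp only [Fin.prod_univ_two, Matrix.cons_val_zero, Matrix.cons_val_one]
    have c : ‖z + t • d - z‖ ≤ ‖d‖ := by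
      rw [add_sub_cancel_left, norm_smul, Real.norm_eq_abs, abs_of_nonneg ht.1]
      exact mul_le_of_le_one_left (norm_nonneg _) ht.2
    calc _ ≤ (K * ‖d‖) * (‖d‖ * ‖d‖) := by
          gcongr
          exact a.trans (by gcongr)
      _ = _ := by ring)
  simp only [zero_div, sub_zero] at key
  exact key.trans (by gcongr; simp)

lemma norm_line {z d : E2} {t : ℝ} (ht : t ∈ Icc (0 : ℝ) 1) : ‖z + t • d - z‖ ≤ ‖d‖ := by
  rw [add_sub_cancel_left, norm_smul, Real.norm_eq_abs, abs_of_nonneg ht.1]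
  exact mul_le_of_le_one_left (norm_nonneg _) ht.2

lemma apply3_le (T : E2 →L[ℝ] E2 →L[ℝ] E2 →L[ℝ] ℝ) (d : E2) : |T d d d| ≤ ‖T‖ * ‖d‖ ^ 3 := by
  rw [← Real.norm_eq_abs]
  calc ‖T d d d‖ ≤ ‖T d d‖ * ‖d‖ := ContinuousLinearMap.le_opNorm _ _
    _ ≤ (‖T d‖ * ‖d‖) * ‖d‖ := by gcongr; exact ContinuousLinearMap.le_opNorm _ _
    _ ≤ ((‖T‖ * ‖d‖) * ‖d‖) * ‖d‖ := by gcongr; exact ContinuousLinearMap.le_opNorm _ _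
    _ = _ := by ring

lemma apply2_le (T : E2 →L[ℝ] E2 →L[ℝ] ℝ) (d : E2) : |T d d| ≤ ‖T‖ * ‖d‖ ^ 2 := by
  rw [← Real.norm_eq_abs]
  calc ‖T d d‖ ≤ ‖T d‖ * ‖d‖ := ContinuousLinearMap.le_opNorm _ _
    _ ≤ (‖T‖ * ‖d‖) * ‖d‖ := by gcongr; exact ContinuousLinearMap.le_opNorm _ _
    _ = _ := by ring

lemma taylor_u {f : E2 → ℝ} (hf : ContDiffOn ℝ 4 f Q2) : ∃ M : ℝ, ∀ z ∈ Q2,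
    ‖D1 f z‖ ≤ M ∧ ‖D2 f z‖ ≤ M ∧ ‖D3 f z‖ ≤ M ∧ ∀ d : E2, z + d ∈ Q2 →
      |f (z + d) - f z - D1 f z d - D2 f z d d / 2 - D3 f z d d d / 6| ≤ M * ‖d‖ ^ 4 := by
  obtain ⟨M1, h1⟩ := bound_Q2 (D1_contDiff (m := 0) (n := 4) (by norm_num) hf).continuousOn
  obtain ⟨M2, h2⟩ := bound_Q2 (D2_contDiff (m := 0) (n := 4) (by norm_num) hf).continuousOn
  obtain ⟨M3, h3⟩ := bound_Q2 (D3_contDiff (m := 0) (n := 4) (by norm_num) hf).continuousOn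
  obtain ⟨K', hK'⟩ := lip_Q2 (D3_contDiff (m := 1) (n := 4) (by norm_num) hf)
  obtain ⟨K, hK0, hK⟩ : ∃ K : ℝ, 0 ≤ K ∧
      ∀ z ∈ Q2, ∀ w ∈ Q2, ‖D3 f w - D3 f z‖ ≤ K * ‖w - z‖ :=
    ⟨max K' 0, by simp, fun z hz w hw => (hK' z hz w hw).trans (by gcongr; simp)⟩
  refine ⟨max (max M1 M2) (max M3 K), fun z hz => ⟨(h1 z hz).trans (by simp),
    (h2 z hz).trans (by simp), (h3 z hz).trans (by simp), fun d hd => ?_⟩⟩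
  have key := line_taylor (hf.of_le (by norm_num)) hz hd (k := D3 f z d d d)
    (B := K * ‖d‖ ^ 4) (fun t ht => by
    have := norm_image_sub_le_of_norm_deriv_le_segment' (a := 0) (b := 1) (C := K * ‖d‖ ^ 4)
      (f := fun t => D2 f (z + t • d) d d - t * D3 f z d d d)
      (f' := fun t => D3 f (z + t • d) d d d - D3 f z d d d)
      (fun x hx => by
        have a := line_deriv ((D2_contDiff (m := 1) (n := 4) (by norm_num) hf).differentiableOn
          (by norm_num)) hz hd hx
        have b := (a.clm_apply (hasDerivWithinAt_const x (Icc (0 : ℝ) 1) d)).clm_apply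
          (hasDerivWithinAt_const x (Icc (0 : ℝ) 1) d)
        have c := ((hasDerivWithinAt_id x (Icc (0 : ℝ) 1)).mul_const (D3 f z d d d))
        convert! b.sub c using 1
        simp [D3])
      (fun x hx => by
        have hx' : x ∈ Icc (0 : ℝ) 1 := ⟨hx.1, hx.2.le⟩
        have a := apply3_le (D3 f (z + x • d) - D3 f z) d
        simp only [ContinuousLinearMap.sub_apply] at a
        refine a.trans ?_
        calc _ ≤ (K * ‖d‖) * ‖d‖ ^ 3 := by
              gcongr
              refine (hK z hz _ (line_mem hz hd hx')).trans ?_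
              gcongr
              exact norm_line hx'
          _ = _ := by ring) t ht
    simp only [zero_smul, add_zero, zero_mul, sub_zero, Real.norm_eq_abs] at this
    rw [sub_right_comm]
    refine this.trans (mul_le_of_le_one_right (by positivity) ht.2))
  exact key.trans (by gcongr; simp)

/-- Contribution of a pair of reflected stencil terms. -/
lemma pair_est {h M a0 la qa l q τ α α' δ δ' : ℝ} (h0 : 0 ≤ h) (h1 : h ≤ 1) (hM : 0 ≤ M)
    (ha0 : |a0| ≤ M) (hla : |la| ≤ M * h) (hqa : |qa| ≤ M * h ^ 2)
    (hα : |α - a0 - la - qa| ≤ M * h ^ 3) (hα' : |α' - a0 + la - qa| ≤ M * h ^ 3)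
    (hl : |l| ≤ M * h) (hq : |q| ≤ M * h ^ 2) (hτ : |τ| ≤ M * h ^ 3)
    (hδ : |δ - l - q - τ| ≤ M * h ^ 4) (hδ' : |δ' + l - q + τ| ≤ M * h ^ 4) :
    |α * δ + α' * δ' - 2 * (a0 * q + la * l)| ≤ 18 * M ^ 2 * h ^ 4 := by
  obtain ⟨ε, hε⟩ : ∃ ε, ε = α - a0 - la - qa := ⟨_, rfl⟩
  obtain ⟨ε', hε'⟩ : ∃ ε, ε = α' - a0 + la - qa := ⟨_, rfl⟩
  obtain ⟨e, he⟩ : ∃ ε, ε = δ - l - q - τ := ⟨_, rfl⟩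
  obtain ⟨e', he'⟩ : ∃ ε, ε = δ' + l - q + τ := ⟨_, rfl⟩
  rw [← hε] at hα
  rw [← hε'] at hα'
  rw [← he] at hδ
  rw [← he'] at hδ'
  have p2 : M * h ^ 2 ≤ M * h := by
    gcongr; exact pow_le_of_le_one h0 h1 (by norm_num)
  have p3 : M * h ^ 3 ≤ M * h ^ 2 :=
    mul_le_mul_of_nonneg_left (pow_le_pow_of_le_one h0 h1 (by norm_num)) hM
  have p4 : M * h ^ 4 ≤ M * h ^ 3 :=
    mul_le_mul_of_nonneg_left (pow_le_pow_of_le_one h0 h1 (by norm_num)) hM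
  have key : α * δ + α' * δ' - 2 * (a0 * q + la * l) =
      a0 * (e + e') + la * (2 * τ + e - e') + qa * (2 * q + e + e') + ε * (l + q + τ + e)
        + ε' * (-l + q - τ + e') := by
    subst hε hε' he he'; ring
  rw [abs_le] at hl hq hτ hδ hδ'
  have b1 : |a0 * (e + e')| ≤ M * (2 * (M * h ^ 4)) := by
    rw [abs_mul]; gcongr; rw [abs_le]; constructor <;> linarith
  have b2 : |la * (2 * τ + e - e')| ≤ (M * h) * (4 * (M * h ^ 3)) := by
    rw [abs_mul]; gcongr; rw [abs_le]; constructor <;> linarith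
  have b3 : |qa * (2 * q + e + e')| ≤ (M * h ^ 2) * (4 * (M * h ^ 2)) := by
    rw [abs_mul]; gcongr; rw [abs_le]; constructor <;> linarith
  have b4 : |ε * (l + q + τ + e)| ≤ (M * h ^ 3) * (4 * (M * h)) := by
    rw [abs_mul]; gcongr; rw [abs_le]; constructor <;> linarith
  have b5 : |ε' * (-l + q - τ + e')| ≤ (M * h ^ 3) * (4 * (M * h)) := by
    rw [abs_mul]; gcongr; rw [abs_le]; constructor <;> linarith
  rw [key]
  have tot : 18 * M ^ 2 * h ^ 4 = M * (2 * (M * h ^ 4)) + (M * h) * (4 * (M * h ^ 3))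
    + (M * h ^ 2) * (4 * (M * h ^ 2)) + (M * h ^ 3) * (4 * (M * h)) + (M * h ^ 3) * (4 * (M * h)) := by
    ring
  rw [tot]
  rw [abs_le] at *
  constructor <;> linarith

/-- The same in terms of functions: offset `c` for the coefficient, `p - r` for the solution. -/
lemma pair_fun {f u : E2 → ℝ} {z : E2} {M h : ℝ} (h0 : 0 ≤ h) (h1 : h ≤ 1) (hM : 0 ≤ M)
    (hA : |f z| ≤ M ∧ ‖D1 f z‖ ≤ M ∧ ‖D2 f z‖ ≤ M ∧ ∀ d : E2, z + d ∈ Q2 →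
      |f (z + d) - f z - D1 f z d - D2 f z d d / 2| ≤ M * ‖d‖ ^ 3)
    (hU : ‖D1 u z‖ ≤ M ∧ ‖D2 u z‖ ≤ M ∧ ‖D3 u z‖ ≤ M ∧ ∀ d : E2, z + d ∈ Q2 →
      |u (z + d) - u z - D1 u z d - D2 u z d d / 2 - D3 u z d d d / 6| ≤ M * ‖d‖ ^ 4)
    (hQ : ∀ d : E2, ‖d‖ ≤ h → z + d ∈ Q2) {c p r : E2} (hc : ‖c‖ ≤ h) (hp : ‖p‖ ≤ h)
    (hr : ‖r‖ ≤ h) :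
    |f (z + c) * (u (z + p) - u (z + r)) + f (z + -c) * (u (z + -p) - u (z + -r))
      - 2 * (f z * (D2 u z p p / 2 - D2 u z r r / 2) + D1 f z c * (D1 u z p - D1 u z r))|
      ≤ 18 * (2 * M) ^ 2 * h ^ 4 := by
  obtain ⟨a0, a1, a2, a3⟩ := hA
  obtain ⟨u1, u2, u3, u4⟩ := hU
  have L : ∀ (T : E2 →L[ℝ] ℝ) (d : E2), ‖T‖ ≤ M → ‖d‖ ≤ h → |T d| ≤ M * h := by
    intro T d hT hd
    exact (T.le_opNorm d).trans (by gcongr)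
  have B : ∀ (T : E2 →L[ℝ] E2 →L[ℝ] ℝ) (d : E2), ‖T‖ ≤ M → ‖d‖ ≤ h → |T d d| ≤ M * h ^ 2 := by
    intro T d hT hd
    exact (apply2_le T d).trans (by gcongr)
  have C : ∀ (T : E2 →L[ℝ] E2 →L[ℝ] E2 →L[ℝ] ℝ) (d : E2), ‖T‖ ≤ M → ‖d‖ ≤ h →
      |T d d d| ≤ M * h ^ 3 := by
    intro T d hT hd
    exact (apply3_le T d).trans (by gcongr)
  have A3 : ∀ d : E2, ‖d‖ ≤ h →
      |f (z + d) - f z - D1 f z d - D2 f z d d / 2| ≤ M * h ^ 3 := fun d hd =>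
    (a3 d (hQ d hd)).trans (by gcongr)
  have U4 : ∀ d : E2, ‖d‖ ≤ h →
      |u (z + d) - u z - D1 u z d - D2 u z d d / 2 - D3 u z d d d / 6| ≤ M * h ^ 4 := fun d hd =>
    (u4 d (hQ d hd)).trans (by gcongr)
  have m1 : 0 ≤ M * h := by positivity
  have m2 : 0 ≤ M * h ^ 2 := by positivity
  have m3 : 0 ≤ M * h ^ 3 := by positivity
  have n1 := L _ c a1 hc
  have n2 := B _ c a2 hc
  have n3 := A3 c hc
  have n4 := A3 (-c) (by simpa using hc)
  have n5 := L _ p u1 hp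
  have n6 := L _ r u1 hr
  have n7 := B _ p u2 hp
  have n8 := B _ r u2 hr
  have n9 := C _ p u3 hp
  have n10 := C _ r u3 hr
  have n11 := U4 p hp
  have n12 := U4 r hr
  have n13 := U4 (-p) (by simpa using hp)
  have n14 := U4 (-r) (by simpa using hr)
  simp only [map_neg, ContinuousLinearMap.neg_apply, neg_neg] at n4 n13 n14
  apply pair_est (qa := D2 f z c c / 2) (τ := D3 u z p p p / 6 - D3 u z r r r / 6) h0 h1
    (by positivity)
  all_goals
    simp only [abs_le] at *
    constructor <;> linarith

lemma D1_expand (T : E2 →L[ℝ] ℝ) (x y : ℝ) : T (x, y) = x * T (1, 0) + y * T (0, 1) := by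
  have : ((x, y) : E2) = x • (1, 0) + y • (0, 1) := by simp
  rw [this, map_add, map_smul, map_smul]; rfl

lemma D2_expand (T : E2 →L[ℝ] E2 →L[ℝ] ℝ) (x y : ℝ) (hT : T (0, 1) (1, 0) = T (1, 0) (0, 1)) :
    T (x, y) (x, y) = x ^ 2 * T (1, 0) (1, 0) + 2 * x * y * T (1, 0) (0, 1)
      + y ^ 2 * T (0, 1) (0, 1) := by
  have : ((x, y) : E2) = x • (1, 0) + y • (0, 1) := by simp
  rw [this, map_add, map_smul, map_smul]
  simp only [_root_.add_apply, _root_.smul_apply, map_add, map_smul,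
    smul_eq_mul, hT]
  ring

lemma D2_symm {u : E2 → ℝ} (hu : ContDiffOn ℝ 4 u Q2) {z : E2} (hz : Q2 ∈ nhds z) (v w : E2) :
    D2 u z v w = D2 u z w v := by
  have h := (hu z (mem_of_mem_nhds hz)).isSymmSndFDerivWithinAt (by simp; norm_num) unique_Q2
    (subset_closure (mem_interior_iff_mem_nhds.2 hz)) (mem_of_mem_nhds hz)
  exact h v w

lemma fderiv_prod {a u : E2 → ℝ} (ha : ContDiffOn ℝ 2 a Q2) (hu : ContDiffOn ℝ 4 u Q2) {z : E2}
    (hz : Q2 ∈ nhds z) (v w : E2) :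
    fderiv ℝ (fun y => a y * fderiv ℝ u y w) z v = D1 a z v * D1 u z w + a z * D2 u z v w := by
  have hzm := mem_of_mem_nhds hz
  have e : (fun y => a y * fderiv ℝ u y w) =ᶠ[nhds z] fun y => a y * D1 u y w := by
    filter_upwards [eventually_mem_nhds_iff.2 hz] with y hy
    rw [D1, fderivWithin_of_mem_nhds hy]
  rw [e.fderiv_eq]
  have h1 : HasFDerivAt a (D1 a z) z :=
    ((ha.differentiableOn (by norm_num)) z hzm).hasFDerivWithinAt.hasFDerivAt hz
  have h2 : HasFDerivAt (D1 u) (D2 u z) z :=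
    (((D1_contDiff (m := 1) (n := 4) (by norm_num) hu).differentiableOn
      (by norm_num)) z hzm).hasFDerivWithinAt.hasFDerivAt hz
  have h3 := h2.clm_apply (hasFDerivAt_const w z)
  have h4 : HasFDerivAt (fun y => a y * D1 u y w) _ z := h1.mul h3
  rw [h4.fderiv]
  simp
  ring

lemma norm_le_h {x y h : ℝ} (hx : |x| ≤ h) (hy : |y| ≤ h) : ‖((x, y) : E2)‖ ≤ h := by
  rw [Prod.norm_def]; exact max_le hx hy

lemma main_est {a u : E2 → ℝ} {x y h M : ℝ} (h0 : 0 < h) (h1 : h ≤ 1) (hM : 0 ≤ M)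
    (hx1 : -1 ≤ x - h) (hx2 : x + h ≤ 1) (hy1 : -1 ≤ y - h) (hy2 : y + h ≤ 1)
    (ha : ContDiffOn ℝ 2 a Q2) (hu : ContDiffOn ℝ 4 u Q2)
    (hA : |a (x, y)| ≤ M ∧ ‖D1 a (x, y)‖ ≤ M ∧ ‖D2 a (x, y)‖ ≤ M ∧ ∀ d : E2, (x, y) + d ∈ Q2 →
      |a ((x, y) + d) - a (x, y) - D1 a (x, y) d - D2 a (x, y) d d / 2| ≤ M * ‖d‖ ^ 3)
    (hU : ‖D1 u (x, y)‖ ≤ M ∧ ‖D2 u (x, y)‖ ≤ M ∧ ‖D3 u (x, y)‖ ≤ M ∧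
      ∀ d : E2, (x, y) + d ∈ Q2 → |u ((x, y) + d) - u (x, y) - D1 u (x, y) d
        - D2 u (x, y) d d / 2 - D3 u (x, y) d d d / 6| ≤ M * ‖d‖ ^ 4) :
    |Lhm a h u (x, y) - (px (fun w => a w * py u w) (x, y) + py (fun w => a w * px u w) (x, y))|
      ≤ 144 * M ^ 2 * h ^ 2 := by
  have hz : Q2 ∈ nhds (x, y) := nhds_Q2 (by linarith) (by linarith) (by linarith) (by linarith)
  have hQ : ∀ d : E2, ‖d‖ ≤ h → (x, y) + d ∈ Q2 := by
    rintro ⟨s, t⟩ hd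
    rw [Prod.norm_def, max_le_iff, Real.norm_eq_abs, Real.norm_eq_abs, abs_le, abs_le] at hd
    obtain ⟨⟨q1, q2⟩, q3, q4⟩ := hd
    rw [Prod.mk_add_mk, mem_Q2]
    simp only at q1 q2 q3 q4
    refine ⟨⟨?_, ?_⟩, ?_, ?_⟩ <;> linarith
  have sy := D2_symm hu hz (0, 1) (1, 0)
  have b0 : |(0 : ℝ)| ≤ h := by simpa using h0.le
  have b1 : |h| ≤ h := by rw [abs_of_pos h0]
  have b2 : |-h| ≤ h := by rw [abs_neg]; exact b1
  have b3 : |h / 2| ≤ h := by rw [abs_of_pos (by positivity)]; linarith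
  have b4 : |-(h / 2)| ≤ h := by rw [abs_neg]; exact b3
  have P := fun c p r => @pair_fun a u (x, y) M h h0.le h1 hM hA hU hQ c p r
  have P1 := P (-(h / 2), h) (0, h) (-h, h) (norm_le_h b4 b1) (norm_le_h b0 b1) (norm_le_h b2 b1)
  have P2 := P (-h, h / 2) (-h, 0) (-h, h) (norm_le_h b2 b3) (norm_le_h b2 b0) (norm_le_h b2 b1)
  have P3 := P (0, h / 2) (0, h) (0, 0) (norm_le_h b0 b3) (norm_le_h b0 b1) (norm_le_h b0 b0)
  have P4 := P (-(h / 2), 0) (-h, 0) (0, 0) (norm_le_h b4 b0) (norm_le_h b2 b0) (norm_le_h b0 b0)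
  simp only [D2_expand _ 0 h sy, D2_expand _ (-h) h sy, D2_expand _ (-h) 0 sy, D2_expand _ 0 0 sy,
    D1_expand _ (-(h / 2)) _, D1_expand _ (-h) _, D1_expand _ 0 h,
    D1_expand _ 0 (h / 2), D1_expand _ 0 0,
    Prod.neg_mk, neg_neg, neg_zero, Prod.mk_add_mk, add_zero, ← sub_eq_add_neg] at P1 P2 P3 P4
  unfold px py
  rw [fderiv_prod ha hu hz, fderiv_prod ha hu hz, sy]
  unfold Lhm
  simp only
  generalize D1 a (x, y) (1, 0) = ax at *
  generalize D1 a (x, y) (0, 1) = ay at *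
  generalize D1 u (x, y) (1, 0) = ux at *
  generalize D1 u (x, y) (0, 1) = uy at *
  generalize D2 u (x, y) (1, 0) (1, 0) = uxx at *
  generalize D2 u (x, y) (1, 0) (0, 1) = uxy at *
  generalize D2 u (x, y) (0, 1) (0, 1) = uyy at *
  have hh : 0 < 2 * h ^ 2 := by positivity
  rw [← mul_le_mul_iff_right₀ hh, ← abs_of_pos hh, ← abs_mul, abs_of_pos hh, mul_sub,
    ← mul_assoc, mul_one_div_cancel hh.ne', one_mul]
  rw [abs_le] at *
  constructor <;> nlinarith only [P1, P2, P3, P4]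

/-- Second-order consistency of the seven-point discretization `Lhm` (the stencil designed
for negative `a₁₂`) of the mixed-derivative part `∂x(a₁₂ ∂y u) + ∂y(a₁₂ ∂x u)` at interior
grid nodes. -/
theorem stmt4 (a12 : ℝ × ℝ → ℝ) (ha12 : C21On a12 Q2)
    (u : ℝ × ℝ → ℝ) (hu : ContDiffOn ℝ 4 u Q2) :
    ∃ C > (0 : ℝ), ∀ N : ℕ, Even N → 4 ≤ N →
      ∀ i j : ℕ, 1 ≤ i → i ≤ N - 1 → 1 ≤ j → j ≤ N - 1 →
        |Lhm a12 (2 / (N : ℝ)) u (nodePt N i j) -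
            (px (fun w => a12 w * py u w) (nodePt N i j)
              + py (fun w => a12 w * px u w) (nodePt N i j))|
          ≤ C * (2 / (N : ℝ)) ^ 2 := by
  obtain ⟨A, hA⟩ := taylor_a ha12
  obtain ⟨U, hU⟩ := taylor_u hu
  obtain ⟨M, hM, hAM, hUM⟩ : ∃ M : ℝ, 0 < M ∧ A ≤ M ∧ U ≤ M :=
    ⟨max 1 (max A U), by simp, by simp, by simp⟩
  refine ⟨144 * M ^ 2, by positivity, fun N _ hN i j hi1 hi2 hj1 hj2 => ?_⟩
  have hN' : (4 : ℝ) ≤ N := by exact_mod_cast hN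
  have hNh : (N : ℝ) * (2 / N) = 2 := by field_simp
  have h0 : (0 : ℝ) < 2 / N := by positivity
  unfold nodePt
  generalize (2 / (N : ℝ)) = h at *
  have bd : ∀ k : ℕ, 1 ≤ k → k ≤ N - 1 → -1 ≤ -1 + (k : ℝ) * h - h ∧ -1 + (k : ℝ) * h + h ≤ 1 := by
    intro k k1 k2
    have k1' : (1 : ℝ) ≤ k := by exact_mod_cast k1
    have k2' : (k : ℝ) + 1 ≤ N := by exact_mod_cast (by omega : k + 1 ≤ N)
    constructor <;> nlinarith
  obtain ⟨x1, x2⟩ := bd i hi1 hi2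
  obtain ⟨y1, y2⟩ := bd j hj1 hj2
  have hz : ((-1 + (i : ℝ) * h, -1 + (j : ℝ) * h) : ℝ × ℝ) ∈ Q2 := by
    rw [mem_Q2]
    refine ⟨⟨?_, ?_⟩, ?_, ?_⟩ <;> linarith
  obtain ⟨a0, a1, a2, a3⟩ := hA _ hz
  obtain ⟨u1, u2, u3, u4⟩ := hU _ hz
  exact main_est h0 (by nlinarith) hM.le x1 x2 y1 y2 ha12.1 hu
    ⟨a0.trans hAM, a1.trans hAM, a2.trans hAM, fun d hd => (a3 d hd).trans (by gcongr)⟩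
    ⟨u1.trans hUM, u2.trans hUM, u3.trans hUM, fun d hd => (u4 d hd).trans (by gcongr)⟩
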